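/- If the active user set satisfies |A| ≤ 2, then for every cache placement vector q ∈ [0,1]^N, every demand map d on A, and every leader group U for (A, d), the D-MCCS delivery rate equals the lower-bound rate: R_MCCS(d; q) = R_lb(D; q), where D = {d_k : k ∈ A}. -/

import Mathlib

/-!
With at most two active users there is at most one group `S` in which the D-MCCS rate takes a
genuine maximum, namely `S = A` when two users request distinct files `x ≠ y`. Then `U = A`, and

`R_MCCS = (1 - q_x)² F_x + (1 - q_y)² F_y + max (q_x (1 - q_x) F_x) (q_y (1 - q_y) F_y)`.

On the other side a bijection `π` onto `{x, y}` contributes the two squares whatever the order,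
since `C(1, 0) = C(0, 0) = 1`, and the mixed term `q (1 - q) F` only for the file placed first,
since `C(1, 1) = 1` and `C(0, 1) = 0`; maximising over the two orders gives the same maximum
(`R_lb_pair`). If only one file is requested, `π` is unique and both rates are single explicit
expressions (`R_lb_singleton`).
-/


open Finset

/-- Maximum of a real-valued function over a finite set (`0` if the set is empty). -/
noncomputable def maxOver {α : Type*} (S : Finset α) (f : α → ℝ) : ℝ :=
  if h : S.Nonempty then S.sup' h f else 0

/-- The D-MCCS delivery rate: the sum, over nonempty subsets `S ⊆ A` with
`S ∩ U ≠ ∅` (the non-redundant groups), of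
`max_{k ∈ S} q_{d_k}^{|S|−1} (1 − q_{d_k})^{|A|−|S|+1} F_{d_k}`. -/
noncomputable def R_MCCS {α : Type*} [DecidableEq α] {N : ℕ} (A U : Finset α)
    (d : α → Fin N) (q F : Fin N → ℝ) : ℝ :=
  ∑ S ∈ A.powerset.filter (fun S => (S ∩ U).Nonempty),
    maxOver S (fun k =>
      q (d k) ^ (S.card - 1) * (1 - q (d k)) ^ (A.card - S.card + 1) * F (d k))

/-- The lower-bound rate: the maximum over bijections `π : {1,…,|D|} → D` of
`Σ_{s=0}^{|A|−1} Σ_{i=1}^{|D|} C(|A|−i, s) q_{π(i)}^s (1 − q_{π(i)})^{|A|−s} F_{π(i)}`,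
where `Acard = |A|`. -/
noncomputable def R_lb {N : ℕ} (Acard : ℕ) (D : Finset (Fin N))
    (q F : Fin N → ℝ) : ℝ :=
  ⨆ π : Fin D.card ≃ {x : Fin N // x ∈ D},
    ∑ s ∈ Finset.range Acard, ∑ i : Fin D.card,
      ((Acard - (i.1 + 1)).choose s : ℝ) * q (π i).1 ^ s *
        (1 - q (π i).1) ^ (Acard - s) * F (π i).1

/-- `U` is a leader group for active set `A` with demand map `d`: `U ⊆ A`, the demand
map is injective on `U`, and the users in `U` request exactly the distinct files
requested by the users in `A`. -/
def IsLeaderGroup {α : Type*} [DecidableEq α] {N : ℕ} (A U : Finset α)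
    (d : α → Fin N) : Prop :=
  U ⊆ A ∧ Set.InjOn d ↑U ∧ U.image d = A.image d

/-- `R_lb` with the index type `Fin D.card` replaced by `Fin m` for a given value `m` of the
cardinality. -/
lemma R_lb_of_card {N : ℕ} (n m : ℕ) (D : Finset (Fin N)) (q F : Fin N → ℝ) (h : D.card = m) :
    R_lb n D q F = ⨆ π : Fin m ≃ {x : Fin N // x ∈ D},
      ∑ s ∈ Finset.range n, ∑ i : Fin m,
        ((n - (i.1 + 1)).choose s : ℝ) * q (π i).1 ^ s *
          (1 - q (π i).1) ^ (n - s) * F (π i).1 := by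
  subst h
  rfl

lemma R_lb_singleton {N : ℕ} (n : ℕ) (x : Fin N) (q F : Fin N → ℝ) :
    R_lb n {x} q F =
      ∑ s ∈ Finset.range n, ((n - 1).choose s : ℝ) * q x ^ s * (1 - q x) ^ (n - s) * F x := by
  rw [R_lb_of_card n 1 {x} q F (Finset.card_singleton x)]
  have hx : ∀ z : {z : Fin N // z ∈ ({x} : Finset (Fin N))}, z.1 = x :=
    fun z => Finset.mem_singleton.mp z.2
  have : Nonempty (Fin 1 ≃ {z : Fin N // z ∈ ({x} : Finset (Fin N))}) :=
    ⟨(Finset.equivFinOfCardEq (Finset.card_singleton x)).symm⟩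
  simp [hx]

/-- For two users with distinct requests the lower bound is the larger of the two orderings. -/
lemma R_lb_pair {N : ℕ} (x y : Fin N) (hxy : x ≠ y) (q F : Fin N → ℝ) :
    R_lb 2 {x, y} q F =
      (1 - q x) ^ 2 * F x + (1 - q y) ^ 2 * F y +
        max (q x * (1 - q x) * F x) (q y * (1 - q y) * F y) := by
  have hc : ({x, y} : Finset (Fin N)).card = 2 := Finset.card_pair hxy
  rw [R_lb_of_card 2 2 {x, y} q F hc]
  have hx : x ∈ ({x, y} : Finset (Fin N)) := by simp
  have hy : y ∈ ({x, y} : Finset (Fin N)) := by simp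
  simp only [Finset.sum_range_succ, Finset.sum_range_zero, Fin.sum_univ_two]
  norm_num
  obtain ⟨e, he0, he1⟩ : ∃ e : Fin 2 ≃ {z : Fin N // z ∈ ({x, y} : Finset (Fin N))},
      (e 0).1 = x ∧ (e 1).1 = y := by
    refine ⟨Equiv.ofBijective ![⟨x, hx⟩, ⟨y, hy⟩] ?_, rfl, rfl⟩
    rw [Fintype.bijective_iff_injective_and_card]
    refine ⟨?_, by rw [Fintype.card_coe, hc, Fintype.card_fin]⟩
    intro i j
    fin_cases i <;> fin_cases j <;> simp [hxy, hxy.symm]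
  have hbdd := fun f : (Fin 2 ≃ {z : Fin N // z ∈ ({x, y} : Finset (Fin N))}) → ℝ =>
    (Set.finite_range f).bddAbove
  apply le_antisymm
  · have : Nonempty (Fin 2 ≃ {z : Fin N // z ∈ ({x, y} : Finset (Fin N))}) := ⟨e⟩
    refine ciSup_le fun π => ?_
    have h0 := (π 0).2
    have h1 := (π 1).2
    have hne : (π 0).1 ≠ (π 1).1 := fun h => by
      simpa using π.injective (Subtype.ext h)
    simp only [Finset.mem_insert, Finset.mem_singleton] at h0 h1
    have hl := le_max_left (q x * (1 - q x) * F x) (q y * (1 - q y) * F y)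
    have hr := le_max_right (q x * (1 - q x) * F x) (q y * (1 - q y) * F y)
    rcases h0 with h0 | h0 <;> rcases h1 with h1 | h1
    · exact absurd (h0.trans h1.symm) hne
    · rw [h0, h1]; linarith
    · rw [h0, h1]; linarith
    · exact absurd (h0.trans h1.symm) hne
  · rcases max_choice (q x * (1 - q x) * F x) (q y * (1 - q y) * F y) with h | h <;> rw [h]
    · refine le_trans (le_of_eq ?_) (le_ciSup (hbdd _) e)
      rw [he0, he1]
    · refine le_trans (le_of_eq ?_) (le_ciSup (hbdd _) ((Equiv.swap 0 1).trans e))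
      simp only [Equiv.trans_apply, Equiv.swap_apply_left, Equiv.swap_apply_right, he0, he1]
      ring

lemma maxOver_singleton {α : Type*} (a : α) (f : α → ℝ) : maxOver {a} f = f a := by
  simp [maxOver]

lemma maxOver_pair {α : Type*} [DecidableEq α] (a b : α) (f : α → ℝ) :
    maxOver {a, b} f = max (f a) (f b) := by
  simp [maxOver, Finset.sup'_insert]

/-- `R_MCCS` for two users: the singleton groups count only for leaders, whereas the group of
both users always counts because it contains a leader. -/
lemma R_MCCS_pair {α : Type*} [DecidableEq α] {N : ℕ} (a b : α) (hab : a ≠ b) (U : Finset α)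
    (d : α → Fin N) (q F : Fin N → ℝ) (hU : a ∈ U ∨ b ∈ U) :
    R_MCCS {a, b} U d q F =
      (if a ∈ U then (1 - q (d a)) ^ 2 * F (d a) else 0) +
      (if b ∈ U then (1 - q (d b)) ^ 2 * F (d b) else 0) +
        max (q (d a) * (1 - q (d a)) * F (d a)) (q (d b) * (1 - q (d b)) * F (d b)) := by
  have hc : ({a, b} : Finset α).card = 2 := Finset.card_pair hab
  have hp : ({a, b} : Finset α).powerset = {∅, {a}, {b}, {a, b}} := by
    ext S
    simp only [Finset.mem_powerset, Finset.mem_insert, Finset.mem_singleton,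
      ← Finset.coe_subset, Finset.coe_pair, Set.subset_pair_iff_eq]
    norm_cast
  have hab' : ({a} : Finset α) ≠ {b} := by simpa using hab
  have h1 : ({a} : Finset α) ≠ {a, b} := fun h => by simpa [hc] using congrArg Finset.card h
  have h2 : ({b} : Finset α) ≠ {a, b} := fun h => by simpa [hc] using congrArg Finset.card h
  have hi : ∀ c : α, (({c} : Finset α) ∩ U).Nonempty ↔ c ∈ U := fun c => by
    simp [Finset.Nonempty]
  have hi2 : (({a, b} : Finset α) ∩ U).Nonempty := by
    rcases hU with h | h
    · exact ⟨a, by simp [h]⟩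
    · exact ⟨b, by simp [h]⟩
  rw [R_MCCS, Finset.sum_filter, hp, Finset.sum_insert (by simp [eq_comm (a := (∅ : Finset α))]),
    Finset.sum_insert (by simp only [Finset.mem_insert, Finset.mem_singleton]; tauto),
    Finset.sum_insert (by simpa using h2), Finset.sum_singleton]
  simp only [hi, hi2, maxOver_singleton, maxOver_pair, hc, Finset.card_singleton]
  simp
  ring

/-- If the active user set satisfies `|A| ≤ 2`, then for every cache placement vector
`q ∈ [0,1]^N`, every demand map `d`, and every leader group `U` for `(A, d)`, the
D-MCCS delivery rate equals the lower-bound rate with `D = {d_k : k ∈ A}`. -/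
theorem rate_eq_lb_of_card_le_two {α : Type*} [DecidableEq α] {N : ℕ}
    (A U : Finset α) (d : α → Fin N) (q F : Fin N → ℝ)
    (hA : A.card ≤ 2) (hq : ∀ n, q n ∈ Set.Icc (0 : ℝ) 1) (hF : ∀ n, 0 ≤ F n)
    (hU : IsLeaderGroup A U d) :
    R_MCCS A U d q F = R_lb A.card (A.image d) q F := by
  obtain ⟨hUA, hinj, him⟩ := hU
  obtain h | h | h : A.card = 0 ∨ A.card = 1 ∨ A.card = 2 := by omega
  · obtain rfl := Finset.card_eq_zero.mp h
    simp [R_MCCS, R_lb, Finset.filter_singleton]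
  · obtain ⟨a, rfl⟩ := Finset.card_eq_one.mp h
    obtain rfl : U = {a} := by
      rcases Finset.subset_singleton_iff.mp hUA with rfl | h
      · simp at him
      · exact h
    rw [Finset.image_singleton, h, R_lb_singleton]
    have hp : ({a} : Finset α).powerset = {∅, {a}} := by
      ext S
      simp [Finset.subset_singleton_iff]
    simp [R_MCCS, Finset.sum_filter, hp, maxOver_singleton,
      Finset.sum_pair (Finset.singleton_ne_empty a).symm]
  · obtain ⟨a, b, hab, rfl⟩ := Finset.card_eq_two.mp h
    have hU : a ∈ U ∨ b ∈ U := by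
      have : d a ∈ U.image d := by rw [him]; simp
      obtain ⟨c, hc, -⟩ := Finset.mem_image.mp this
      rcases Finset.mem_insert.mp (hUA hc) with rfl | h
      · exact Or.inl hc
      · rw [Finset.mem_singleton] at h
        exact Or.inr (h ▸ hc)
    rw [h, R_MCCS_pair a b hab U d q F hU, Finset.image_insert, Finset.image_singleton]
    by_cases hd : d a = d b
    · -- Equal requests: exactly one of the two users is the leader.
      have hnot : ¬ (a ∈ U ∧ b ∈ U) := fun h => hab (hinj h.1 h.2 hd)
      rw [hd, Finset.pair_eq_singleton, R_lb_singleton]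
      rcases hU with h | h
      · have hb : b ∉ U := fun hb => hnot ⟨h, hb⟩
        simp [h, hb, Finset.sum_range_succ]
      · have ha : a ∉ U := fun ha => hnot ⟨ha, h⟩
        simp [h, ha, Finset.sum_range_succ]
    · -- Distinct requests: both users must be leaders.
      have hmem : ∀ c ∈ ({a, b} : Finset α), c ∈ U := by
        intro c hc
        have : d c ∈ U.image d := by rw [him]; exact Finset.mem_image_of_mem d hc
        obtain ⟨c', hc', e⟩ := Finset.mem_image.mp this
        have hc'' := hUA hc'
        simp only [Finset.mem_insert, Finset.mem_singleton] at hc hc''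
        rcases hc with rfl | rfl <;> rcases hc'' with rfl | rfl
        · exact hc'
        · exact absurd e.symm hd
        · exact absurd e hd
        · exact hc'
      rw [R_lb_pair _ _ hd, if_pos (hmem a (by simp)), if_pos (hmem b (by simp))]
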